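/- Let ε > 0, H ∈ (0,1) and T > 0, and let η, v : ℝ × ℝ → ℝ (time × space) be C^∞ functions with 1 + ε·η(t,x) ≥ H for all (t,x), satisfying ∂_t η + ∂_x v = 0 and ∂_t v + (1+εη)∂_x η − ε(1+εη)∂_x³η + ε ∂_x( v²/(1+εη) ) = 0 for all (t,x). Suppose there is a compact set K ⊂ ℝ such that for every t ∈ [0,T] the functions η(t,·) and v(t,·) vanish outside K. Define E₀(t) = ∫_ℝ η² dx + ε ∫_ℝ (∂_xη)² dx + ∫_ℝ v²/(1+εη) dx. Then for every t ∈ (0,T), E₀ is differentiable at t and (1/2)·E₀'(t) = −(ε/2)∫_ℝ (∂_tη)·v²/(1+εη)² dx − ε ∫_ℝ ∂_x( v²/(1+εη) )·( v/(1+εη) ) dx. -/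

import Mathlib

open MeasureTheory

/-- Partial derivative in the first (time) variable of `f : ℝ → ℝ → ℝ`. -/
noncomputable def dt1 (f : ℝ → ℝ → ℝ) : ℝ → ℝ → ℝ := fun t x => deriv (fun s => f s x) t

/-- Partial derivative in the second (space) variable of `f : ℝ → ℝ → ℝ`. -/
noncomputable def dx1 (f : ℝ → ℝ → ℝ) : ℝ → ℝ → ℝ := fun t x => deriv (fun y => f t y) x

/-!
The energy density `e = η² + ε η_x² + v²/(1+εη)` obeys a local balance law `e_t = F_x - S` with
flux `F = -2ηv + 2ε(v η_xx - η_x v_x)`. The factor `1 + εη` in the momentum equation cancels the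
weight of the kinetic term, so all linear contributions collect into `F_x`; the source `S` holds
what is left: the time derivative of the weight and the convective term. Integrating in space
removes the flux.
-/

open Function (uncurry)
open scoped Topology

section ParametricIntegral

variable {𝕜 X E : Type*} [RCLike 𝕜] [TopologicalSpace X] [T2Space X] [MeasurableSpace X]
  [OpensMeasurableSpace X] {μ : Measure X} [IsFiniteMeasureOnCompacts μ]
  [NormedAddCommGroup E] [NormedSpace ℝ E] [NormedSpace 𝕜 E]

theorem hasDerivAt_integral_of_eventually_eq_zero_off_compact {f f' : 𝕜 → X → E} {t : 𝕜}
    {K : Set X} (hK : IsCompact K) (hf : ∀ s, Continuous (f s)) (hf' : Continuous (uncurry f'))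
    (hderiv : ∀ s x, HasDerivAt (f · x) (f' s x) s)
    (hzero : ∀ᶠ s in 𝓝 t, ∀ x ∉ K, f s x = 0) :
    Integrable (f' t) μ ∧ HasDerivAt (fun s => ∫ x, f s x ∂μ) (∫ x, f' t x ∂μ) t := by
  have hzero' : ∀ᶠ s in 𝓝 t, ∀ x ∉ K, f' s x = 0 := by
    filter_upwards [hzero.eventually_nhds] with s hs x hx
    have hconst : (f · x) =ᶠ[𝓝 s] fun _ => 0 := hs.mono fun _ h => h x hx
    exact (hderiv s x).unique ((hasDerivAt_const s 0).congr_of_eventuallyEq hconst)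
  have hsupp : ∀ᶠ s in 𝓝 t, HasCompactSupport (f s) := hzero.mono fun _ h => .intro hK h
  obtain ⟨r, hr, hball⟩ := Metric.nhds_basis_closedBall.eventually_iff.1 hzero'
  obtain ⟨C, hC⟩ := ((isCompact_closedBall t r).prod hK).exists_bound_of_continuousOn
    hf'.continuousOn
  have hbound : ∀ x, ∀ s ∈ Metric.closedBall t r, ‖f' s x‖ ≤ K.indicator (fun _ => C) x := by
    intro x s hs
    by_cases hx : x ∈ K
    · simpa [hx] using hC (s, x) ⟨hs, hx⟩
    · simp [hx, hball hs x hx]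
  have hint' : Integrable (f' t) μ := (hf'.uncurry_left t).integrable_of_hasCompactSupport
    (.intro hK hzero'.self_of_nhds)
  refine hasDerivAt_integral_of_dominated_loc_of_deriv_le (Metric.closedBall_mem_nhds t hr)
    ?_ ((hf t).integrable_of_hasCompactSupport hsupp.self_of_nhds) hint'.aestronglyMeasurable
    (.of_forall hbound) ?_ (.of_forall fun x s _ => hderiv s x)
  · exact hsupp.mono fun s hs => ((hf s).integrable_of_hasCompactSupport hs).aestronglyMeasurable
  · exact (integrable_indicator_iff hK.measurableSet).2 (integrableOn_const hK.measure_lt_top.ne)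

end ParametricIntegral

theorem deriv_eq_zero_of_eq_zero_off_closed {𝕜 E : Type*} [NontriviallyNormedField 𝕜]
    [NormedAddCommGroup E] [NormedSpace 𝕜 E] {g : 𝕜 → E} {K : Set 𝕜} (hK : IsClosed K)
    (hg : ∀ x ∉ K, g x = 0) : ∀ x ∉ K, deriv g x = 0 := by
  have hsupp : tsupport g ⊆ K := closure_minimal (Function.support_subset_iff'.2 hg) hK
  exact fun x hx => deriv_of_notMem_tsupport fun h => hx (hsupp h)

theorem integral_deriv_eq_zero_of_hasCompactSupport {E : Type*} [NormedAddCommGroup E]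
    [NormedSpace ℝ E] {g : ℝ → E} (hg : ContDiff ℝ 1 g) (hsupp : HasCompactSupport g) :
    ∫ x, deriv g x = 0 :=
  integral_eq_zero_of_hasDerivAt_of_integrable
    (fun x => (hg.differentiable one_ne_zero x).hasDerivAt)
    ((hg.continuous_deriv le_rfl).integrable_of_hasCompactSupport hsupp.deriv)
    (hg.continuous.integrable_of_hasCompactSupport hsupp)

section PartialDerivatives

variable {f : ℝ → ℝ → ℝ}

theorem hasDerivAt_fst_slice {t x : ℝ} (hf : DifferentiableAt ℝ (uncurry f) (t, x)) :
    HasDerivAt (fun s => f s x) (fderiv ℝ (uncurry f) (t, x) (1, 0)) t :=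
  hf.hasFDerivAt.comp_hasDerivAt (f := fun s => (s, x)) t
    ((hasDerivAt_id t).prodMk (hasDerivAt_const t x))

theorem hasDerivAt_snd_slice {t x : ℝ} (hf : DifferentiableAt ℝ (uncurry f) (t, x)) :
    HasDerivAt (fun y => f t y) (fderiv ℝ (uncurry f) (t, x) (0, 1)) x :=
  hf.hasFDerivAt.comp_hasDerivAt (f := fun y => (t, y)) x
    ((hasDerivAt_const x t).prodMk (hasDerivAt_id x))

theorem hasDerivAt_dt1 {t x : ℝ} (hf : DifferentiableAt ℝ (uncurry f) (t, x)) :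
    HasDerivAt (fun s => f s x) (dt1 f t x) t :=
  (hasDerivAt_fst_slice hf).differentiableAt.hasDerivAt

theorem hasDerivAt_dx1 {t x : ℝ} (hf : DifferentiableAt ℝ (uncurry f) (t, x)) :
    HasDerivAt (fun y => f t y) (dx1 f t x) x :=
  (hasDerivAt_snd_slice hf).differentiableAt.hasDerivAt

theorem uncurry_dt1_eq_fderiv (hf : Differentiable ℝ (uncurry f)) :
    uncurry (dt1 f) = fun p => fderiv ℝ (uncurry f) p (1, 0) :=
  funext fun p => (hasDerivAt_fst_slice (hf p)).deriv

theorem uncurry_dx1_eq_fderiv (hf : Differentiable ℝ (uncurry f)) :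
    uncurry (dx1 f) = fun p => fderiv ℝ (uncurry f) p (0, 1) :=
  funext fun p => (hasDerivAt_snd_slice (hf p)).deriv

theorem contDiff_dt1 {n : WithTop ℕ∞} (hf : ContDiff ℝ (n + 1) (uncurry f)) :
    ContDiff ℝ n (uncurry (dt1 f)) := by
  rw [uncurry_dt1_eq_fderiv (hf.differentiable (by simp))]
  exact (hf.fderiv_right le_rfl).clm_apply contDiff_const

theorem contDiff_dx1 {n : WithTop ℕ∞} (hf : ContDiff ℝ (n + 1) (uncurry f)) :
    ContDiff ℝ n (uncurry (dx1 f)) := by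
  rw [uncurry_dx1_eq_fderiv (hf.differentiable (by simp))]
  exact (hf.fderiv_right le_rfl).clm_apply contDiff_const

theorem dt1_dx1_comm (hf : ContDiff ℝ 2 (uncurry f)) : dt1 (dx1 f) = dx1 (dt1 f) := by
  have hf₁ : ContDiff ℝ (1 + 1) (uncurry f) := by rwa [one_add_one_eq_two]
  have hdiff : Differentiable ℝ (uncurry f) := hf.differentiable two_ne_zero
  have hfderiv : Differentiable ℝ (fderiv ℝ (uncurry f)) :=
    (hf₁.fderiv_right le_rfl).differentiable one_ne_zero
  have hdt := (contDiff_dt1 hf₁).differentiable one_ne_zero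
  have hdx := (contDiff_dx1 hf₁).differentiable one_ne_zero
  apply Function.uncurry_injective
  rw [uncurry_dt1_eq_fderiv hdx, uncurry_dx1_eq_fderiv hdt, uncurry_dt1_eq_fderiv hdiff,
    uncurry_dx1_eq_fderiv hdiff]
  funext p
  rw [fderiv_clm_apply (hfderiv p) (by fun_prop), fderiv_clm_apply (hfderiv p) (by fun_prop)]
  simpa using (hf.contDiffAt.isSymmSndFDerivAt (by simp)).eq (1, 0) (0, 1)

end PartialDerivatives

/-- The kinetic part `v² / (1 + εη)` of the density of `E₀` (without the factor `1/2`), which is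
also the quadratic flux in the momentum equation. -/
noncomputable def kineticDensity (ε : ℝ) (η v : ℝ → ℝ → ℝ) : ℝ → ℝ → ℝ :=
  fun t x => v t x ^ 2 / (1 + ε * η t x)

/-- The density `η² + ε η_x² + v² / (1 + εη)` of the energy `E₀`. -/
noncomputable def energyDensity (ε : ℝ) (η v : ℝ → ℝ → ℝ) : ℝ → ℝ → ℝ :=
  fun t x => η t x ^ 2 + ε * dx1 η t x ^ 2 + kineticDensity ε η v t x

/-- The flux in the balance law of `energyDensity`, signed so that the density grows at the rate
of the space derivative of the flux. -/
noncomputable def energyFlux (ε : ℝ) (η v : ℝ → ℝ → ℝ) : ℝ → ℝ → ℝ :=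
  fun t x => -2 * (η t x * v t x)
    + 2 * ε * (v t x * dx1 (dx1 η) t x - dx1 η t x * dx1 v t x)

/-- The loss term in the balance law of `energyDensity`: the contributions of the system's
nonlinearity that are not a space derivative. -/
noncomputable def energySource (ε : ℝ) (η v : ℝ → ℝ → ℝ) : ℝ → ℝ → ℝ :=
  fun t x => ε * (dt1 η t x * v t x ^ 2 / (1 + ε * η t x) ^ 2)
    + 2 * ε * (dx1 (kineticDensity ε η v) t x * (v t x / (1 + ε * η t x)))

section EnergyBalance

variable {ε : ℝ} {η v : ℝ → ℝ → ℝ}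

theorem contDiff_kineticDensity {n : WithTop ℕ∞} (hη : ContDiff ℝ n (uncurry η))
    (hv : ContDiff ℝ n (uncurry v)) (hne : ∀ t x, 1 + ε * η t x ≠ 0) :
    ContDiff ℝ n (uncurry (kineticDensity ε η v)) :=
  (hv.pow 2).div (contDiff_const.add (contDiff_const.mul hη)) fun p => hne p.1 p.2

theorem contDiff_energyDensity {n : WithTop ℕ∞} (hη : ContDiff ℝ (n + 1) (uncurry η))
    (hv : ContDiff ℝ n (uncurry v)) (hne : ∀ t x, 1 + ε * η t x ≠ 0) :
    ContDiff ℝ n (uncurry (energyDensity ε η v)) := by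
  have hη' : ContDiff ℝ n (uncurry η) := hη.of_le le_self_add
  exact ((hη'.pow 2).add (contDiff_const.mul ((contDiff_dx1 hη).pow 2))).add
    (contDiff_kineticDensity hη' hv hne)

theorem contDiff_energyFlux {n : WithTop ℕ∞} (hη : ContDiff ℝ (n + 1 + 1) (uncurry η))
    (hv : ContDiff ℝ (n + 1) (uncurry v)) : ContDiff ℝ n (uncurry (energyFlux ε η v)) := by
  have hη₁ : ContDiff ℝ (n + 1) (uncurry η) := hη.of_le le_self_add
  have hη₀ : ContDiff ℝ n (uncurry η) := hη₁.of_le le_self_add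
  have hv₀ : ContDiff ℝ n (uncurry v) := hv.of_le le_self_add
  exact (contDiff_const.mul (hη₀.mul hv₀)).add (contDiff_const.mul
    ((hv₀.mul (contDiff_dx1 (contDiff_dx1 hη))).sub ((contDiff_dx1 hη₁).mul (contDiff_dx1 hv))))

theorem hasDerivAt_kineticDensity {t x : ℝ} (hη : DifferentiableAt ℝ (uncurry η) (t, x))
    (hv : DifferentiableAt ℝ (uncurry v) (t, x)) (hne : 1 + ε * η t x ≠ 0) :
    HasDerivAt (fun s => kineticDensity ε η v s x)
      (2 * (v t x / (1 + ε * η t x) * dt1 v t x)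
        - ε * (dt1 η t x * v t x ^ 2 / (1 + ε * η t x) ^ 2)) t := by
  have hquot := ((hasDerivAt_dt1 hv).pow 2).div
    (((hasDerivAt_dt1 hη).const_mul ε).const_add 1) hne
  refine hquot.congr_deriv ?_
  simp only [Pi.pow_apply]
  field_simp
  ring

theorem dt1_energyDensity {t x : ℝ} (hη : ContDiff ℝ 2 (uncurry η))
    (hv : DifferentiableAt ℝ (uncurry v) (t, x)) (hne : 1 + ε * η t x ≠ 0) :
    dt1 (energyDensity ε η v) t x = 2 * η t x * dt1 η t x
      + 2 * ε * dx1 η t x * dx1 (dt1 η) t x + 2 * (v t x / (1 + ε * η t x) * dt1 v t x)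
      - ε * (dt1 η t x * v t x ^ 2 / (1 + ε * η t x) ^ 2) := by
  have hη₀ : DifferentiableAt ℝ (uncurry η) (t, x) := hη.differentiable two_ne_zero _
  have hηx : DifferentiableAt ℝ (uncurry (dx1 η)) (t, x) :=
    (contDiff_dx1 (n := 1) (hη.of_le (by norm_num))).differentiable one_ne_zero _
  have hsum := (((hasDerivAt_dt1 hη₀).pow 2).add
    (((hasDerivAt_dt1 hηx).pow 2).const_mul ε)).add (hasDerivAt_kineticDensity hη₀ hv hne)
  refine hsum.deriv.trans ?_
  rw [dt1_dx1_comm hη]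
  ring

theorem dx1_energyFlux (hη : ContDiff ℝ 3 (uncurry η)) (hv : ContDiff ℝ 2 (uncurry v))
    (t x : ℝ) :
    dx1 (energyFlux ε η v) t x = -2 * (dx1 η t x * v t x + η t x * dx1 v t x)
      + 2 * ε * (v t x * dx1 (dx1 (dx1 η)) t x - dx1 η t x * dx1 (dx1 v) t x) := by
  have hηx : ContDiff ℝ 2 (uncurry (dx1 η)) := contDiff_dx1 (hη.of_le (by norm_num))
  have hηxx : ContDiff ℝ 1 (uncurry (dx1 (dx1 η))) := contDiff_dx1 (hηx.of_le (by norm_num))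
  have hvx : ContDiff ℝ 1 (uncurry (dx1 v)) := contDiff_dx1 (hv.of_le (by norm_num))
  have dη := hasDerivAt_dx1 (hη.differentiable three_ne_zero (t, x))
  have dηx := hasDerivAt_dx1 (hηx.differentiable two_ne_zero (t, x))
  have dηxx := hasDerivAt_dx1 (hηxx.differentiable one_ne_zero (t, x))
  have dv := hasDerivAt_dx1 (hv.differentiable two_ne_zero (t, x))
  have dvx := hasDerivAt_dx1 (hvx.differentiable one_ne_zero (t, x))
  refine (((dη.mul dv).const_mul (-2)).add
    (((dv.mul dηxx).sub (dηx.mul dvx)).const_mul (2 * ε))).deriv.trans ?_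
  ring

theorem dt1_energyDensity_eq_dx1_energyFlux_sub_energySource (hη : ContDiff ℝ 3 (uncurry η))
    (hv : ContDiff ℝ 2 (uncurry v)) {t x : ℝ} (hne : 1 + ε * η t x ≠ 0)
    (hmass : ∀ y, dt1 η t y + dx1 v t y = 0)
    (hmomentum : dt1 v t x + (1 + ε * η t x) * dx1 η t x
      - ε * (1 + ε * η t x) * dx1 (dx1 (dx1 η)) t x + ε * dx1 (kineticDensity ε η v) t x = 0) :
    dt1 (energyDensity ε η v) t x = dx1 (energyFlux ε η v) t x - energySource ε η v t x := by
  have hηt : dt1 η t = -dx1 v t := funext fun y => eq_neg_of_add_eq_zero_left (hmass y)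
  have hηtx : dx1 (dt1 η) t x = -dx1 (dx1 v) t x :=
    (congrArg (deriv · x) hηt).trans deriv.neg
  have hvt : v t x / (1 + ε * η t x) * dt1 v t x = v t x * (ε * dx1 (dx1 (dx1 η)) t x - dx1 η t x)
      - ε * (dx1 (kineticDensity ε η v) t x * (v t x / (1 + ε * η t x))) := by
    field_simp
    linear_combination v t x * hmomentum
  rw [dt1_energyDensity (hη.of_le (by norm_num)) (hv.differentiable two_ne_zero _) hne,
    dx1_energyFlux hη hv, hηtx, energySource]
  linear_combination 2 * hvt + 2 * η t x * hmass x

end EnergyBalance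

section EnergyIntegrals

variable {ε t : ℝ} {η v : ℝ → ℝ → ℝ}

theorem energyDensity_eq_zero_off_closed {K : Set ℝ} (hK : IsClosed K)
    (hsupp : ∀ x ∉ K, η t x = 0 ∧ v t x = 0) : ∀ x ∉ K, energyDensity ε η v t x = 0 := by
  intro x hx
  have hηx : dx1 η t x = 0 :=
    deriv_eq_zero_of_eq_zero_off_closed hK (fun y hy => (hsupp y hy).1) x hx
  simp [energyDensity, kineticDensity, hsupp x hx, hηx]

theorem hasCompactSupport_energyFlux (hv : HasCompactSupport (v t)) :
    HasCompactSupport (energyFlux ε η v t) :=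
  .add (.mul_left (.mul_left hv)) (.mul_left (.sub (.mul_right hv) (.mul_left hv.deriv)))

theorem integral_energyDensity (hη : ContDiff ℝ 1 (η t)) (hv : Continuous (v t))
    (hne : ∀ x, 1 + ε * η t x ≠ 0) (hηsupp : HasCompactSupport (η t))
    (hvsupp : HasCompactSupport (v t)) :
    ∫ x, energyDensity ε η v t x =
      (∫ x, η t x ^ 2) + ε * (∫ x, dx1 η t x ^ 2) + ∫ x, kineticDensity ε η v t x := by
  have hηc : Continuous (η t) := hη.continuous
  have hηxc : Continuous (dx1 η t) := hη.continuous_deriv le_rfl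
  have hint₁ : Integrable fun x => η t x ^ 2 :=
    (hηc.pow 2).integrable_of_hasCompactSupport <| hηsupp.comp_left (zero_pow two_ne_zero)
  have hint₂ : Integrable fun x => dx1 η t x ^ 2 :=
    (hηxc.pow 2).integrable_of_hasCompactSupport <|
      hηsupp.deriv.comp_left (zero_pow two_ne_zero)
  have hint₃ : Integrable (kineticDensity ε η v t) :=
    ((hv.pow 2).div₀ (by fun_prop) hne).integrable_of_hasCompactSupport <|
      hvsupp.mono fun x hx hvx => hx (by simp [hvx])
  simp only [energyDensity]
  rw [integral_add (by exact hint₁.add (hint₂.const_mul ε)) hint₃,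
    integral_add hint₁ (hint₂.const_mul ε), integral_const_mul]

theorem integral_energySource (hη : ContDiff ℝ 1 (uncurry η)) (hv : ContDiff ℝ 1 (uncurry v))
    (hne : ∀ t x, 1 + ε * η t x ≠ 0) (hvsupp : HasCompactSupport (v t)) :
    ∫ x, energySource ε η v t x =
      ε * (∫ x, dt1 η t x * v t x ^ 2 / (1 + ε * η t x) ^ 2)
        + 2 * ε * ∫ x, dx1 (kineticDensity ε η v) t x * (v t x / (1 + ε * η t x)) := by
  have hηc : Continuous (η t) := hη.continuous.uncurry_left t
  have hηtc : Continuous (dt1 η t) :=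
    (contDiff_dt1 (n := 0) (hη.of_le (by norm_num))).continuous.uncurry_left t
  have hvc : Continuous (v t) := hv.continuous.uncurry_left t
  have hkinc : Continuous (dx1 (kineticDensity ε η v) t) :=
    (contDiff_dx1 (n := 0) ((contDiff_kineticDensity hη hv hne).of_le (by norm_num))).continuous
      |>.uncurry_left t
  have hint₁ : Integrable fun x => dt1 η t x * v t x ^ 2 / (1 + ε * η t x) ^ 2 :=
    ((hηtc.mul (hvc.pow 2)).div₀ (by fun_prop) fun x =>
      pow_ne_zero 2 (hne t x)).integrable_of_hasCompactSupport <|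
        hvsupp.mono fun x hx hvx => hx (by simp [hvx])
  have hint₂ : Integrable fun x =>
      dx1 (kineticDensity ε η v) t x * (v t x / (1 + ε * η t x)) :=
    (hkinc.mul (hvc.div₀ (by fun_prop) (hne t))).integrable_of_hasCompactSupport <|
      hvsupp.mono fun x hx hvx => hx (by simp [hvx])
  simp only [energySource]
  rw [integral_add (hint₁.const_mul ε) (hint₂.const_mul (2 * ε)), integral_const_mul,
    integral_const_mul]

end EnergyIntegrals

theorem hasDerivAt_integral_energyDensity {ε t : ℝ} {η v : ℝ → ℝ → ℝ}
    (hη : ContDiff ℝ 3 (uncurry η)) (hv : ContDiff ℝ 2 (uncurry v))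
    (hne : ∀ t x, 1 + ε * η t x ≠ 0) (hmass : ∀ x, dt1 η t x + dx1 v t x = 0)
    (hmomentum : ∀ x, dt1 v t x + (1 + ε * η t x) * dx1 η t x
      - ε * (1 + ε * η t x) * dx1 (dx1 (dx1 η)) t x + ε * dx1 (kineticDensity ε η v) t x = 0)
    {K : Set ℝ} (hK : IsCompact K) (hsupp : ∀ᶠ s in 𝓝 t, ∀ x ∉ K, η s x = 0 ∧ v s x = 0) :
    HasDerivAt (fun s => ∫ x, energyDensity ε η v s x) (-∫ x, energySource ε η v t x) t := by
  have hdens : ContDiff ℝ 1 (uncurry (energyDensity ε η v)) :=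
    contDiff_energyDensity (hη.of_le (by norm_num)) (hv.of_le (by norm_num)) hne
  obtain ⟨hdens_int, hderiv⟩ := hasDerivAt_integral_of_eventually_eq_zero_off_compact (μ := volume)
    hK (fun s => hdens.continuous.uncurry_left s)
    (contDiff_dt1 (n := 0) (hdens.of_le (by norm_num))).continuous
    (fun s x => hasDerivAt_dt1 (hdens.differentiable one_ne_zero (s, x)))
    (hsupp.mono fun _ hs => energyDensity_eq_zero_off_closed hK.isClosed hs)
  have hflux : ContDiff ℝ 1 (energyFlux ε η v t) :=
    (contDiff_energyFlux (hη.of_le (by norm_num)) (hv.of_le (by norm_num))).comp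
      (contDiff_prodMk_right t)
  have hflux_supp : HasCompactSupport (energyFlux ε η v t) :=
    hasCompactSupport_energyFlux (.intro hK fun x hx => (hsupp.self_of_nhds x hx).2)
  have hflux_int : Integrable (dx1 (energyFlux ε η v) t) :=
    (hflux.continuous_deriv le_rfl).integrable_of_hasCompactSupport hflux_supp.deriv
  have hflux_zero : ∫ x, dx1 (energyFlux ε η v) t x = 0 :=
    integral_deriv_eq_zero_of_hasCompactSupport hflux hflux_supp
  have hbalance : ∀ x, energySource ε η v t x
      = dx1 (energyFlux ε η v) t x - dt1 (energyDensity ε η v) t x := fun x => by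
    rw [dt1_energyDensity_eq_dx1_energyFlux_sub_energySource hη hv (hne t x) hmass (hmomentum x),
      sub_sub_cancel]
  refine hderiv.congr_deriv ?_
  simp_rw [hbalance]
  rw [integral_sub hflux_int hdens_int, hflux_zero, zero_sub, neg_neg]

theorem energy_identity_reduced_general {ε t : ℝ} {η v : ℝ → ℝ → ℝ}
    (hη : ContDiff ℝ 3 (uncurry η)) (hv : ContDiff ℝ 2 (uncurry v))
    (hne : ∀ t x, 1 + ε * η t x ≠ 0) (hmass : ∀ x, dt1 η t x + dx1 v t x = 0)
    (hmomentum : ∀ x, dt1 v t x + (1 + ε * η t x) * dx1 η t x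
      - ε * (1 + ε * η t x) * dx1 (dx1 (dx1 η)) t x
      + ε * dx1 (fun t x => v t x ^ 2 / (1 + ε * η t x)) t x = 0)
    {K : Set ℝ} (hK : IsCompact K) (hsupp : ∀ᶠ s in 𝓝 t, ∀ x ∉ K, η s x = 0 ∧ v s x = 0) :
    HasDerivAt (fun τ => (∫ x, η τ x ^ 2) + ε * (∫ x, dx1 η τ x ^ 2)
        + ∫ x, v τ x ^ 2 / (1 + ε * η τ x))
      (2 * (-(ε / 2) * (∫ x, dt1 η t x * v t x ^ 2 / (1 + ε * η t x) ^ 2)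
        - ε * ∫ x, dx1 (fun t x => v t x ^ 2 / (1 + ε * η t x)) t x *
            (v t x / (1 + ε * η t x)))) t := by
  have hη₁ : ContDiff ℝ 1 (uncurry η) := hη.of_le (by norm_num)
  have hv₁ : ContDiff ℝ 1 (uncurry v) := hv.of_le (by norm_num)
  have henergy := hasDerivAt_integral_energyDensity hη hv hne hmass hmomentum hK hsupp
  rw [integral_energySource hη₁ hv₁ hne
    (.intro hK fun x hx => (hsupp.self_of_nhds x hx).2)] at henergy
  refine (henergy.congr_of_eventuallyEq ?_).congr_deriv ?_
  · filter_upwards [hsupp] with τ hτ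
    exact (integral_energyDensity (hη₁.comp (contDiff_prodMk_right τ))
      (hv₁.continuous.uncurry_left τ) (hne τ) (.intro hK fun x hx => (hτ x hx).1)
      (.intro hK fun x hx => (hτ x hx).2)).symm
  · unfold kineticDensity
    ring

/-- The L²-level energy identity (Step 3.1 of the proof of Theorem 4.6) for the reduced
system: with `E₀(t) = ∫ η² + ε ∫ η_x² + ∫ v²/(1+εη)`, one has
`(1/2)E₀'(t) = -(ε/2)∫ η_t v²/(1+εη)² - ε ∫ (v²/(1+εη))_x ⬝ v/(1+εη)`. -/
theorem energy_identity_reduced (ε H T : ℝ) (hε : 0 < ε) (hH : H ∈ Set.Ioo (0 : ℝ) 1)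
    (hT : 0 < T) (η v : ℝ → ℝ → ℝ)
    (hη : ContDiff ℝ (⊤ : ℕ∞) fun p : ℝ × ℝ => η p.1 p.2)
    (hv : ContDiff ℝ (⊤ : ℕ∞) fun p : ℝ × ℝ => v p.1 p.2)
    (hpos : ∀ t x, H ≤ 1 + ε * η t x)
    (heq1 : ∀ t x, dt1 η t x + dx1 v t x = 0)
    (heq2 : ∀ t x, dt1 v t x + (1 + ε * η t x) * dx1 η t x
      - ε * (1 + ε * η t x) * dx1 (dx1 (dx1 η)) t x
      + ε * dx1 (fun t x => v t x ^ 2 / (1 + ε * η t x)) t x = 0)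
    (K : Set ℝ) (hK : IsCompact K)
    (hsupp : ∀ t ∈ Set.Icc (0 : ℝ) T, ∀ x, x ∉ K → η t x = 0 ∧ v t x = 0) :
    ∀ t ∈ Set.Ioo (0 : ℝ) T,
      HasDerivAt (fun τ => (∫ x, η τ x ^ 2) + ε * (∫ x, dx1 η τ x ^ 2)
          + ∫ x, v τ x ^ 2 / (1 + ε * η τ x))
        (2 * (-(ε / 2) * (∫ x, dt1 η t x * v t x ^ 2 / (1 + ε * η t x) ^ 2)
          - ε * ∫ x, dx1 (fun t x => v t x ^ 2 / (1 + ε * η t x)) t x *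
              (v t x / (1 + ε * η t x)))) t := by
  intro t ht
  refine energy_identity_reduced_general (contDiff_infty.1 hη 3) (contDiff_infty.1 hv 2)
    (fun s x => (hH.1.trans_le (hpos s x)).ne') (heq1 t) (heq2 t) hK ?_
  filter_upwards [Icc_mem_nhds ht.1 ht.2] with s hs using hsupp s hs
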